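/- arXiv:2205.05837 — 2 statements merged into one kernel-verified Lean document; each statement's English description precedes it below -/
import Mathlib

section
/- Let G₁ and G₂ be groups, ▷ a left action of G₁ on G₂ by group automorphisms, and t : G₂ → G₁ a group homomorphism satisfying the Peiffer identity t(y) ▷ y' = y y' y⁻¹ for all y, y' ∈ G₂. Let (y₁, u₁), (z₁, v₁), (y₂, u₂), (z₂, v₂) ∈ G₂ × G₁ with v₁ = t(y₁) u₁ and v₂ = t(y₂) u₂ (so the vertical compositions are defined). Then the interchange law holds: ((y₁, u₁) · (z₁, v₁)) ∘ ((y₂, u₂) · (z₂, v₂)) = ((y₁, u₁) ∘ (y₂, u₂)) · ((z₁, v₁) ∘ (z₂, v₂)); explicitly, (z₁ y₁ (u₁ ▷ (z₂ y₂)), u₁ u₂) = ((z₁ (v₁ ▷ z₂)) (y₁ (u₁ ▷ y₂)), u₁ u₂). -/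
/-- The interchange law between horizontal and vertical
composition of bigons, under the Peiffer identity. -/
theorem interchange_law
    {G₁ G₂ : Type*} [Group G₁] [Group G₂]
    (act : G₁ → G₂ → G₂)
    (hact_one : ∀ y : G₂, act 1 y = y)
    (hact_mul : ∀ (u v : G₁) (y : G₂), act (u * v) y = act u (act v y))
    (hact_hom : ∀ (u : G₁) (y y' : G₂), act u (y * y') = act u y * act u y')
    (t : G₂ →* G₁)
    (hpeiffer : ∀ y y' : G₂, act (t y) y' = y * y' * y⁻¹)
    (y₁ z₁ y₂ z₂ : G₂) (u₁ v₁ u₂ v₂ : G₁)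
    (hv₁ : v₁ = t y₁ * u₁) (hv₂ : v₂ = t y₂ * u₂) :
    ((z₁ * y₁ * act u₁ (z₂ * y₂), u₁ * u₂) : G₂ × G₁)
      = ((z₁ * act v₁ z₂) * (y₁ * act u₁ y₂), u₁ * u₂) := by
  rw [hv₁, hact_mul, hpeiffer, hact_hom]
  simp [mul_assoc]
end

section
/- Let G₁ and G₂ be groups, ▷ a left action of G₁ on G₂ by group automorphisms, and t : G₂ → G₁ a group homomorphism satisfying the G₁-equivariance axiom t(u ▷ y) = u t(y) u⁻¹. Then the map ((x, h), (y, u)) ↦ ((h ▷ y) x⁻¹, t(x) h u) defines a left action of the semidirect product group G₂ ⋊ G₁ (with multiplication (x, h)(x', h') = (x (h ▷ x'), h h')) on the set G₂ × G₁: the identity (1, 1) acts trivially, and ((x, h)(x', h')) • (y, u) = (x, h) • ((x', h') • (y, u)) for all x, x' ∈ G₂, h, h' ∈ G₁, (y, u) ∈ G₂ × G₁. -/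
/-- The combined 1- and 2-gauge transformations
`(x, h) • (y, u) = ((h ▷ y) x⁻¹, t(x) h u)` define a left action of the
semidirect product `G₂ ⋊ G₁` (multiplication `(x,h)(x',h') = (x (h ▷ x'), hh')`)
on the set `G₂ × G₁`. -/
theorem gauge_transformations_form_action
    {G₁ G₂ : Type*} [Group G₁] [Group G₂]
    (act : G₁ → G₂ → G₂)
    (hact_one : ∀ y : G₂, act 1 y = y)
    (hact_mul : ∀ (u v : G₁) (y : G₂), act (u * v) y = act u (act v y))
    (hact_hom : ∀ (u : G₁) (y y' : G₂), act u (y * y') = act u y * act u y')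
    (t : G₂ →* G₁)
    (hequiv : ∀ (u : G₁) (y : G₂), t (act u y) = u * t y * u⁻¹)
    (smul : G₂ × G₁ → G₂ × G₁ → G₂ × G₁)
    (hdef : ∀ p a : G₂ × G₁,
      smul p a = (act p.2 a.1 * p.1⁻¹, t p.1 * p.2 * a.2)) :
    (∀ a : G₂ × G₁, smul ((1 : G₂), (1 : G₁)) a = a) ∧
    (∀ (x x' : G₂) (h h' : G₁) (a : G₂ × G₁),
        smul (x * act h x', h * h') a = smul (x, h) (smul (x', h') a)) := by
  have hinv : ∀ (u : G₁) (y : G₂), act u y⁻¹ = (act u y)⁻¹ := fun u y =>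
    map_inv (MonoidHom.mk' (act u) (hact_hom u)) y
  refine ⟨fun a => ?_, fun x x' h h' a => ?_⟩
  · simp [hdef, hact_one]
  · simp [hdef, hact_mul, hact_hom, hequiv, hinv, mul_assoc]
end
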